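/- Let R be a 3-dimensional regular local ring with m = (x, y, z), and I the ideal of maximal minors of ((x, y, z), (y, z, x²)). Then for every n ≥ 1, length_R(I^{(n)}/Iⁿ) = (1/2)C(n+2,3) − (1/4)C(n+1,2) − (1/8)n − 1/8 if n is even, and (1/2)C(n+2,3) − (1/4)C(n+1,2) − (1/8)n if n is odd. Equivalently, length_R(I^{(n)}/Iⁿ) = Σ_{k=1}^{⌊n/2⌋} C(n − 2k + 2, 2). -/

import Mathlib

open IsLocalRing

/-- The `n`-th symbolic power `I⁽ⁿ⁾ = ⋂_{p ∈ Min(R/I)} (IⁿR_p ∩ R)`. -/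
noncomputable def symbolicPower {R : Type*} [CommRing R] (I : Ideal R) (n : ℕ) : Ideal R :=
  ⨅ p : I.minimalPrimes,
    haveI : Ideal.IsPrime (p : Ideal R) := p.2.1.1
    Ideal.comap (algebraMap R (Localization.AtPrime (p : Ideal R)))
      (Ideal.map (algebraMap R (Localization.AtPrime (p : Ideal R))) (I ^ n))

/-- `M` has (finite) length `n` over `R`: there is a composition series from
`⊥` to `⊤` of length `n`. -/
def HasLength (R M : Type*) [CommRing R] [AddCommGroup M] [Module R M] (n : ℕ) : Prop :=
  ∃ s : CompositionSeries (Submodule R M), s.head = ⊥ ∧ s.last = ⊤ ∧ s.length = n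

/-!
Write `a, b, c` for the generators `z² - x²y`, `x³ - yz`, `y² - xz` of `I`, so that
`xa + yb + zc = 0` and `ya + zb + x²c = 0`. There is an element `d` with `xd = b² - ac`,
`yd = xc² - ab` and `zd = a² - xbc`; hence `m d ⊆ I²`, while `I² ⊆ d m + c I`. The ideals
`L₀ = R`, `L₁ = I`, `Lₙ₊₂ = d Lₙ + Iⁿ⁺²` satisfy `mⁿ Lₙ ⊆ Iⁿ`, and `x` is regular modulo each of
them because `c, d, x` is a regular sequence; as `R/I` has dimension one and `m` is the only prime
containing `I` and `x`, this forces `Lₙ = I⁽ⁿ⁾`.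

Multiplication by `d` maps `Lₙ` onto `Lₙ₊₂ / Iⁿ⁺²` with kernel `m Iⁿ`, so
`ℓ(Lₙ₊₂ / Iⁿ⁺²) = ℓ(Lₙ / Iⁿ) + ℓ(Iⁿ / m Iⁿ)`. Since `a` is regular modulo `(x, y) ⊇ (b, c)` and
`a (x, y) ⊆ m (b, c)`, the fiber cone `⨁ Iⁿ / m Iⁿ` is a polynomial ring in the three variables
`a, b, c`, so `ℓ(Iⁿ / m Iⁿ) = C(n + 2, 2)`.
-/

section RegularLocal

variable {R : Type*} [CommRing R]

theorem exists_mem_forall_add_notMem_of_isAntichain {S : Finset (Ideal R)}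
    (hprime : ∀ p ∈ S, p.IsPrime) (hanti : IsAntichain (· ≤ ·) (S : Set (Ideal R))) {x : R}
    {J : Ideal R} (hJ : ∀ p ∈ S, ¬ Ideal.span {x} ⊔ J ≤ p) : ∃ r ∈ J, ∀ p ∈ S, x + r ∉ p := by
  classical
  have hnle : ∀ q ∈ S.filter (x ∈ ·), ¬ J ⊓ (S.filter (x ∉ ·)).inf id ≤ q := by
    intro q hq hle
    obtain ⟨hqS, hxq⟩ := Finset.mem_filter.1 hq
    rcases (hprime q hqS).inf_le.1 hle with h | h
    · exact hJ q hqS (sup_le ((Ideal.span_singleton_le_iff_mem q).2 hxq) h)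
    · obtain ⟨p, hp, hpq⟩ := (hprime q hqS).inf_le'.1 h
      obtain ⟨hpS, hxp⟩ := Finset.mem_filter.1 hp
      exact hxp (hanti.eq hpS hqS hpq ▸ hxq)
  have hunion := (Ideal.subset_union_prime (f := id) ⊥ ⊥ fun q hq _ _ ↦
    hprime q (Finset.mem_of_mem_filter q hq)).not.2 fun ⟨q, hq, hle⟩ ↦ hnle q hq hle
  obtain ⟨r, ⟨hrJ, hr⟩, hrS⟩ := Set.not_subset.1 hunion
  refine ⟨r, hrJ, fun p hp ↦ ?_⟩
  by_cases hx : x ∈ p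
  · have hrp : r ∉ p := fun h ↦ hrS (Set.mem_biUnion (Finset.mem_filter.2 ⟨hp, hx⟩) h)
    rwa [Ideal.add_mem_iff_right p hx]
  · have hrp : r ∈ p := (Finset.inf_le (f := id) (Finset.mem_filter.2 ⟨hp, hx⟩)) hr
    rwa [Ideal.add_mem_iff_left p hrp]

theorem span_singleton_add_sup {x r : R} {J : Ideal R} (hr : r ∈ J) :
    Ideal.span {x + r} ⊔ J = Ideal.span {x} ⊔ J := by
  have hrJ : ∀ K : Ideal R, r ∈ K ⊔ J := fun K ↦ Ideal.mem_sup_right hr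
  refine le_antisymm (sup_le ?_ le_sup_right) (sup_le ?_ le_sup_right) <;>
    rw [Ideal.span_singleton_le_iff_mem]
  · exact add_mem (Ideal.mem_sup_left (Ideal.mem_span_singleton_self x)) (hrJ _)
  · exact (Ideal.add_mem_iff_left _ (hrJ _)).1
      (Ideal.mem_sup_left (Ideal.mem_span_singleton_self (x + r)))

variable [IsLocalRing R] {l : List R}

theorem isLocalRing_quotient_span_singleton {x : R} (hx : x ∈ maximalIdeal R) :
    IsLocalRing (R ⧸ Ideal.span {x}) :=
  haveI : Nontrivial (R ⧸ Ideal.span {x}) := Ideal.Quotient.nontrivial_iff.2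
    (by rwa [Ne, Ideal.span_singleton_eq_top])
  .of_surjective' (Ideal.Quotient.mk _) Ideal.Quotient.mk_surjective

theorem ofList_map_mk_eq_maximalIdeal {x : R} [IsLocalRing (R ⧸ Ideal.span {x})]
    (hl : Ideal.ofList (x :: l) = maximalIdeal R) :
    Ideal.ofList (l.map (Ideal.Quotient.mk (Ideal.span {x}))) =
      maximalIdeal (R ⧸ Ideal.span {x}) := by
  rw [← map_maximalIdeal_of_surjective _ Ideal.Quotient.mk_surjective, ← hl, Ideal.ofList_cons,
    Ideal.map_sup, Ideal.map_quotient_self, bot_sup_eq, Ideal.map_ofList]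

theorem not_maximalIdeal_le_of_mem_minimalPrimes (hdim : 0 < ringKrullDim R) {p : Ideal R}
    (hp : p ∈ minimalPrimes R) : ¬ maximalIdeal R ≤ p := by
  intro hle
  have hprime : p.IsPrime := hp.1.1
  have hpm : p = maximalIdeal R := (le_maximalIdeal hprime.ne_top).antisymm hle
  rw [← maximalIdeal_height_eq_ringKrullDim, ← hpm, Ideal.height_eq_zero_iff.2 hp] at hdim
  exact lt_irrefl _ hdim

variable [IsNoetherianRing R]

theorem isDomain_of_isPrime_span_singleton {t : R} (ht : t ∈ maximalIdeal R)
    (hprime : (Ideal.span {t}).IsPrime) (hmin : ∀ p ∈ minimalPrimes R, t ∉ p) : IsDomain R := by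
  obtain ⟨q, hq, hqt⟩ := Ideal.exists_minimalPrimes_le (bot_le : ⊥ ≤ Ideal.span {t})
  have hqprime : q.IsPrime := hq.1.1
  have hle : q ≤ ⊥ := by
    refine Submodule.le_of_le_smul_of_le_jacobson_bot (I := maximalIdeal R)
      (IsNoetherian.noetherian q) (maximalIdeal_le_jacobson _) fun s hs ↦ ?_
    obtain ⟨u, rfl⟩ := Ideal.mem_span_singleton.1 (hqt hs)
    have hu : u ∈ q := (hqprime.mem_or_mem hs).resolve_left (hmin q hq)
    exact Submodule.mem_sup_right (Submodule.smul_mem_smul ht hu)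
  exact IsDomain.of_bot_isPrime R (hbp := le_bot_iff.1 hle ▸ hqprime)

theorem le_ringKrullDim_quotient_span_singleton {x : R} (hx : x ∈ maximalIdeal R) {n : ℕ}
    (hn : (n + 1 : ℕ) ≤ ringKrullDim R) : n ≤ ringKrullDim (R ⧸ Ideal.span {x}) := by
  have h := hn.trans (ringKrullDim_le_ringKrullDim_quotient_add_encard {x}
    (by simpa [ringJacobson_eq_maximalIdeal] using hx))
  rw [Set.encard_singleton] at h
  exact ENat.WithBot.add_le_add_one_right_iff.1 (by exact_mod_cast h)

theorem ringKrullDim_le_length_of_ofList_eq_maximalIdeal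
    (hl : Ideal.ofList l = maximalIdeal R) : ringKrullDim R ≤ l.length := by
  classical
  have hset : {r | r ∈ l} = (l.toFinset : Set R) := by ext; simp
  calc ringKrullDim R ≤ (maximalIdeal R).spanFinrank := ringKrullDim_le_spanFinrank_maximalIdeal R
    _ ≤ l.length := by
      rw [← hl, Ideal.ofList, hset]
      exact_mod_cast (Submodule.spanFinrank_span_le_ncard_of_finite l.toFinset.finite_toSet).trans
        ((Set.ncard_coe_finset _).trans_le l.toFinset_card_le)

theorem isDomain_of_length_le_ringKrullDim (hl : Ideal.ofList l = maximalIdeal R)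
    (hd : l.length ≤ ringKrullDim R) : IsDomain R := by
  induction hn : l.length generalizing R l with
  | zero =>
    rw [List.length_eq_zero_iff.1 hn, Ideal.ofList_nil] at hl
    exact IsDomain.of_bot_isPrime R (hbp := hl ▸ inferInstance)
  | succ n ih =>
    obtain ⟨x, l, rfl⟩ := List.exists_cons_of_length_eq_add_one hn
    have hn' : l.length = n := by simpa using hn
    rw [hn] at hd
    have hpos : 0 < ringKrullDim R := lt_of_lt_of_le (by exact_mod_cast n.succ_pos) hd
    obtain ⟨r, hr, hmin⟩ := exists_mem_forall_add_notMem_of_isAntichain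
      (S := (minimalPrimes.finite_of_isNoetherianRing R).toFinset) (x := x) (J := Ideal.ofList l)
      (fun p hp ↦ ((Set.Finite.mem_toFinset _).1 hp).1.1)
      (by rw [Set.Finite.coe_toFinset]; exact setOfPred_minimal_antichain _) fun p hp ↦ by
        rw [← Ideal.ofList_cons, hl]
        exact not_maximalIdeal_le_of_mem_minimalPrimes hpos ((Set.Finite.mem_toFinset _).1 hp)
    have hl' : Ideal.ofList ((x + r) :: l) = maximalIdeal R := by
      rw [← hl, Ideal.ofList_cons, Ideal.ofList_cons, span_singleton_add_sup hr]
    have ht : x + r ∈ maximalIdeal R := hl' ▸ Ideal.subset_span List.mem_cons_self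
    have := isLocalRing_quotient_span_singleton ht
    have hquot : IsDomain (R ⧸ Ideal.span {x + r}) := ih (ofList_map_mk_eq_maximalIdeal hl')
      (by simpa [hn'] using le_ringKrullDim_quotient_span_singleton ht hd) (by simpa using hn')
    exact isDomain_of_isPrime_span_singleton ht ((Ideal.Quotient.isDomain_iff_prime _).1 hquot)
      fun p hp ↦ hmin p ((Set.Finite.mem_toFinset _).2 hp)

theorem isWeaklyRegular_of_length_le_ringKrullDim (hl : Ideal.ofList l = maximalIdeal R)
    (hd : l.length ≤ ringKrullDim R) : RingTheory.Sequence.IsWeaklyRegular R l := by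
  induction hn : l.length generalizing R l with
  | zero => simp [List.length_eq_zero_iff.1 hn]
  | succ n ih =>
    obtain ⟨x, l, rfl⟩ := List.exists_cons_of_length_eq_add_one hn
    have hn' : l.length = n := by simpa using hn
    have := isDomain_of_length_le_ringKrullDim hl hd
    have hx : x ∈ maximalIdeal R := hl ▸ Ideal.subset_span List.mem_cons_self
    have hx0 : x ≠ 0 := by
      rintro rfl
      have hl0 : Ideal.ofList l = maximalIdeal R := by simpa using hl
      have hle : l.length + 1 ≤ l.length :=
        mod_cast hd.trans (ringKrullDim_le_length_of_ofList_eq_maximalIdeal hl0)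
      exact hle.not_gt l.length.lt_succ_self
    have := isLocalRing_quotient_span_singleton hx
    have hquot := ih (ofList_map_mk_eq_maximalIdeal hl)
      (by simpa [hn'] using le_ringKrullDim_quotient_span_singleton hx (hn ▸ hd))
      (by simpa using hn')
    refine (RingTheory.Sequence.isWeaklyRegular_cons_iff R x l).2 ⟨.of_ne_zero hx0, ?_⟩
    have e : (R ⧸ Ideal.span {x}) ≃ₗ[R] QuotSMulTop x R :=
      Submodule.quotEquivOfEq _ _ (by rw [← Submodule.ideal_span_singleton_smul]; simp)
    exact (e.isWeaklyRegular_congr l).1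
      ((RingTheory.Sequence.isWeaklyRegular_map_algebraMap_iff (R ⧸ Ideal.span {x}) _ l).1 hquot)

end RegularLocal

section RegularQuotient

variable {R : Type*} [CommRing R]

theorem isSMulRegular_quotient_iff_of_sub_mem {J : Ideal R} {r s : R} (h : r - s ∈ J) :
    IsSMulRegular (R ⧸ J) r ↔ IsSMulRegular (R ⧸ J) s := by
  have hrs : ∀ q : R ⧸ J, r • q = s • q := fun q ↦ by
    rw [Algebra.smul_def, Algebra.smul_def, Ideal.Quotient.algebraMap_eq,
      Ideal.Quotient.eq.2 h]
  simp only [IsSMulRegular, Function.Injective, hrs]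

theorem isWeaklyRegular_triple_iff {r s t : R} :
    RingTheory.Sequence.IsWeaklyRegular R [r, s, t] ↔
      IsSMulRegular R r ∧ IsSMulRegular (R ⧸ Ideal.span {r}) s ∧
        IsSMulRegular (R ⧸ Ideal.span {r, s}) t := by
  have h₀ : IsSMulRegular (R ⧸ (Ideal.ofList ([r, s, t].take 0) • ⊤ : Ideal R)) r ↔ _ :=
    (Submodule.quotEquivOfEqBot _ (by simp)).isSMulRegular_congr r
  have h₁ : IsSMulRegular (R ⧸ (Ideal.ofList ([r, s, t].take 1) • ⊤ : Ideal R)) s ↔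
      IsSMulRegular (R ⧸ Ideal.span {r}) s :=
    (Submodule.quotEquivOfEq _ _ (by simp)).isSMulRegular_congr s
  have h₂ : IsSMulRegular (R ⧸ (Ideal.ofList ([r, s, t].take 2) • ⊤ : Ideal R)) t ↔
      IsSMulRegular (R ⧸ Ideal.span {r, s}) t :=
    (Submodule.quotEquivOfEq _ _ (by simp [Ideal.span_insert])).isSMulRegular_congr t
  rw [← h₀, ← h₁, ← h₂]
  exact ⟨fun h ↦ ⟨h.1 0 (by simp), h.1 1 (by simp), h.1 2 (by simp)⟩, fun h ↦ ⟨fun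
    | 0, _ => h.1
    | 1, _ => h.2.1
    | 2, _ => h.2.2⟩⟩

theorem isWeaklyRegular_triple_of_sub_mem {r s t s' t' : R}
    (h : RingTheory.Sequence.IsWeaklyRegular R [r, s, t]) (hs : s' - s ∈ Ideal.span {r})
    (ht : t' - t ∈ Ideal.span {r, s}) : RingTheory.Sequence.IsWeaklyRegular R [r, s', t'] := by
  have hspan : Ideal.span {r, s'} = Ideal.span {r, s} := by
    have := span_singleton_add_sup (x := s) hs
    rwa [add_sub_cancel, sup_comm, sup_comm (Ideal.span {s}), ← Ideal.span_insert,
      ← Ideal.span_insert] at this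
  rw [isWeaklyRegular_triple_iff] at h ⊢
  rw [hspan, isSMulRegular_quotient_iff_of_sub_mem hs, isSMulRegular_quotient_iff_of_sub_mem ht]
  exact h

section IsLocalRing

variable [IsNoetherianRing R] [IsLocalRing R] {r s t : R}

theorem isWeaklyRegular_triple_rotate (h : RingTheory.Sequence.IsWeaklyRegular R [r, s, t])
    (hr : r ∈ maximalIdeal R) (hs : s ∈ maximalIdeal R) (ht : t ∈ maximalIdeal R) :
    RingTheory.Sequence.IsWeaklyRegular R [s, t, r] :=
  isWeaklyRegular_of_perm_of_subset_maximalIdeal h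
    (List.perm_append_comm (l₁ := [r]) (l₂ := [s, t])) (by simp [-mem_maximalIdeal, hr, hs, ht])

theorem isWeaklyRegular_triple_swap (h : RingTheory.Sequence.IsWeaklyRegular R [r, s, t])
    (hr : r ∈ maximalIdeal R) (hs : s ∈ maximalIdeal R) (ht : t ∈ maximalIdeal R) :
    RingTheory.Sequence.IsWeaklyRegular R [s, r, t] :=
  isWeaklyRegular_of_perm_of_subset_maximalIdeal h (List.Perm.swap s r [t])
    (by simp [-mem_maximalIdeal, hr, hs, ht])

theorem isWeaklyRegular_triple_pow (h : RingTheory.Sequence.IsWeaklyRegular R [r, s, t])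
    (hr : r ∈ maximalIdeal R) (hs : s ∈ maximalIdeal R) (ht : t ∈ maximalIdeal R) {j : ℕ}
    (hj : j ≠ 0) (k : ℕ) : RingTheory.Sequence.IsWeaklyRegular R [r, s ^ j, t ^ k] := by
  have htrs := isWeaklyRegular_triple_iff.1
    (isWeaklyRegular_triple_rotate (isWeaklyRegular_triple_rotate h hr hs ht) hs ht hr)
  have htrsj : RingTheory.Sequence.IsWeaklyRegular R [t, r, s ^ j] :=
    isWeaklyRegular_triple_iff.2 ⟨htrs.1, htrs.2.1, htrs.2.2.pow j⟩
  have hrsjt := isWeaklyRegular_triple_iff.1 (isWeaklyRegular_triple_rotate htrsj ht hr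
    (Ideal.pow_mem_of_mem _ hs j (Nat.pos_of_ne_zero hj)))
  exact isWeaklyRegular_triple_iff.2 ⟨hrsjt.1, hrsjt.2.1, hrsjt.2.2.pow k⟩

end IsLocalRing

theorem exists_eq_mul_of_mul_eq_mul {r s u v : R} (hr : IsSMulRegular R r)
    (hs : IsSMulRegular (R ⧸ Ideal.span {r}) s) (h : s * u = r * v) :
    ∃ w, u = r * w ∧ v = s * w := by
  obtain ⟨w, rfl⟩ := Ideal.mem_span_singleton.1 (mem_of_isSMulRegular_quotient_of_smul_mem hs
    (Ideal.mem_span_singleton.2 ⟨v, h⟩))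
  exact ⟨w, rfl, hr (by simpa only [smul_eq_mul, mul_left_comm] using h.symm)⟩

-- The ideal of maximal minors is linked to the ideal of a column by two of the minors.
theorem mem_span_minors_of_mul_mem {p₁ p₂ p₃ q₁ q₂ q₃ a b c r : R}
    (ha : a = p₃ * q₂ - p₂ * q₃) (hb : b = p₁ * q₃ - p₃ * q₁) (hc : c = p₂ * q₁ - p₁ * q₂)
    (hp₂ : IsSMulRegular R p₂) (hq₂ : IsSMulRegular (R ⧸ Ideal.span {p₂}) q₂)
    (hcreg : IsSMulRegular R c) (hareg : IsSMulRegular (R ⧸ Ideal.span {c}) a)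
    (hpr : p₂ * r ∈ Ideal.span {c, a}) (hqr : q₂ * r ∈ Ideal.span {c, a}) :
    r ∈ Ideal.span {a, b, c} := by
  obtain ⟨v, u, huv⟩ := Ideal.mem_span_pair.1 hpr
  obtain ⟨v', u', huv'⟩ := Ideal.mem_span_pair.1 hqr
  obtain ⟨e, hu, hv⟩ := exists_eq_mul_of_mul_eq_mul hcreg hareg
    (u := q₂ * u - p₂ * u') (v := p₂ * v' - q₂ * v) (by linear_combination q₂ * huv - p₂ * huv')
  obtain ⟨s, hs, -⟩ := exists_eq_mul_of_mul_eq_mul hp₂ hq₂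
    (u := u + p₁ * e) (v := u' + q₁ * e) (by linear_combination hu + e * hc)
  obtain ⟨t, ht, -⟩ := exists_eq_mul_of_mul_eq_mul hp₂ hq₂
    (u := v + p₃ * e) (v := v' + q₃ * e) (by linear_combination -hv - e * ha)
  refine Ideal.mem_span_insert.2 ⟨s, e * b + t * c, Ideal.mem_span_pair.2 ⟨e, t, rfl⟩, hp₂ ?_⟩
  simp only [smul_eq_mul]
  subst ha hb hc
  linear_combination -huv + (p₃ * q₂ - p₂ * q₃) * hs + (p₂ * q₁ - p₁ * q₂) * ht

theorem isSMulRegular_quotient_span_minors {p₁ p₂ p₃ q₁ q₂ q₃ a b c t : R}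
    (ha : a = p₃ * q₂ - p₂ * q₃) (hb : b = p₁ * q₃ - p₃ * q₁) (hc : c = p₂ * q₁ - p₁ * q₂)
    (hp₂ : IsSMulRegular R p₂) (hq₂ : IsSMulRegular (R ⧸ Ideal.span {p₂}) q₂)
    (hcreg : IsSMulRegular R c) (hareg : IsSMulRegular (R ⧸ Ideal.span {c}) a)
    (htreg : IsSMulRegular (R ⧸ Ideal.span {c, a}) t) :
    IsSMulRegular (R ⧸ Ideal.span {a, b, c}) t := by
  have hpb : p₂ * b = -p₃ * c + -p₁ * a := by subst ha hb hc; ring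
  have hqb : q₂ * b = -q₃ * c + -q₁ * a := by subst ha hb hc; ring
  have hcol : ∀ s ∈ Ideal.span {a, b, c},
      p₂ * s ∈ Ideal.span {c, a} ∧ q₂ * s ∈ Ideal.span {c, a} := by
    intro s hs
    obtain ⟨u, v, w, rfl⟩ := Submodule.mem_span_triple.1 hs
    simp only [smul_eq_mul, Ideal.mem_span_pair]
    exact ⟨⟨p₂ * w - v * p₃, p₂ * u - v * p₁, by linear_combination -v * hpb⟩,
      ⟨q₂ * w - v * q₃, q₂ * u - v * q₁, by linear_combination -v * hqb⟩⟩
  rw [isSMulRegular_quotient_iff_mem_of_smul_mem]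
  intro r hr
  obtain ⟨hp, hq⟩ := hcol _ hr
  rw [smul_eq_mul, mul_left_comm] at hp hq
  exact mem_span_minors_of_mul_mem ha hb hc hp₂ hq₂ hcreg hareg
    (mem_of_isSMulRegular_quotient_of_smul_mem htreg hp)
    (mem_of_isSMulRegular_quotient_of_smul_mem htreg hq)

end RegularQuotient

/-- For `I = (a, b, c)` the ideal of maximal minors of the matrix with rows `(x, y, z)` and
`(y, z, x²)` and `d` the element with `x d = b² - a c`, this is the filtration `L` with
`L₀ = R`, `L₁ = I` and `Lₙ₊₂ = d Lₙ + Iⁿ⁺²`; it turns out that `Lₙ = I⁽ⁿ⁾`. -/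
def symbolicFiltration {R : Type*} [CommRing R] (I : Ideal R) (d : R) : ℕ → Ideal R
  | 0 => ⊤
  | 1 => I
  | n + 2 => Ideal.span {d} * symbolicFiltration I d n ⊔ I ^ (n + 2)

section SymbolicFiltration

variable {R : Type*} [CommRing R] {I m : Ideal R} {c d x : R}

theorem pow_le_symbolicFiltration (n : ℕ) : I ^ n ≤ symbolicFiltration I d n := by
  match n with
  | 0 => exact le_top
  | 1 => exact (pow_one I).le
  | n + 2 => exact le_sup_right

theorem mul_symbolicFiltration_le (n : ℕ) :
    I * symbolicFiltration I d n ≤ symbolicFiltration I d (n + 1) := by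
  induction n using Nat.twoStepInduction with
  | zero => exact Ideal.mul_le_left
  | one => exact (sq I).ge.trans (le_sup_right (a := Ideal.span {d} * ⊤))
  | more n ih _ =>
    rw [symbolicFiltration, symbolicFiltration, Ideal.mul_sup, mul_left_comm, ← pow_succ']
    exact sup_le_sup_right (Ideal.mul_mono_right ih) _

theorem pow_mul_symbolicFiltration_le (hmd : m * Ideal.span {d} ≤ I ^ 2) (n : ℕ) :
    m ^ n * symbolicFiltration I d n ≤ I ^ n := by
  induction n using Nat.twoStepInduction with
  | zero => simp [symbolicFiltration]
  | one => exact Ideal.mul_le_right.trans (pow_one I).ge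
  | more n ih _ =>
    rw [symbolicFiltration, Ideal.mul_sup]
    refine sup_le ?_ Ideal.mul_le_right
    calc m ^ (n + 2) * (Ideal.span {d} * symbolicFiltration I d n)
        = m * (m * Ideal.span {d}) * (m ^ n * symbolicFiltration I d n) := by ring
      _ ≤ I ^ 2 * I ^ n := Ideal.mul_mono (Ideal.mul_le_right.trans hmd) ih
      _ = I ^ (n + 2) := by rw [← pow_add, add_comm]

theorem pow_add_two_le (hsq : I ^ 2 ≤ Ideal.span {d} * m ⊔ Ideal.span {c} * I) (n : ℕ) :
    I ^ (n + 2) ≤ Ideal.span {d} * (m * I ^ n) ⊔ Ideal.span {c} * I ^ (n + 1) :=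
  calc I ^ (n + 2) = I ^ 2 * I ^ n := by rw [← pow_add, add_comm]
    _ ≤ (Ideal.span {d} * m ⊔ Ideal.span {c} * I) * I ^ n := Ideal.mul_mono_left hsq
    _ = Ideal.span {d} * (m * I ^ n) ⊔ Ideal.span {c} * I ^ (n + 1) := by
      rw [Ideal.sup_mul, mul_assoc, mul_assoc, ← pow_succ']

theorem symbolicFiltration_add_two (hc : c ∈ I)
    (hsq : I ^ 2 ≤ Ideal.span {d} * m ⊔ Ideal.span {c} * I) (n : ℕ) :
    symbolicFiltration I d (n + 2) =
      Ideal.span {d} * symbolicFiltration I d n ⊔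
        Ideal.span {c} * symbolicFiltration I d (n + 1) := by
  refine le_antisymm (sup_le le_sup_left ((pow_add_two_le hsq n).trans (sup_le_sup ?_ ?_)))
    (sup_le le_sup_left ?_)
  · exact Ideal.mul_mono_right (Ideal.mul_le_right.trans (pow_le_symbolicFiltration n))
  · exact Ideal.mul_mono_right (pow_le_symbolicFiltration (n + 1))
  · exact (Ideal.mul_mono_left ((Ideal.span_singleton_le_iff_mem I).2 hc)).trans
      (mul_symbolicFiltration_le (n + 1))

theorem mul_mem_symbolicFiltration_add_two {r : R} {n : ℕ} (hr : r ∈ symbolicFiltration I d n) :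
    d * r ∈ symbolicFiltration I d (n + 2) :=
  Ideal.mem_sup_left (Ideal.mul_mem_mul (Ideal.mem_span_singleton_self d) hr)

theorem mul_mem_symbolicFiltration_succ {r : R} {n : ℕ} (hc : c ∈ I)
    (hr : r ∈ symbolicFiltration I d n) : c * r ∈ symbolicFiltration I d (n + 1) :=
  mul_symbolicFiltration_le n (Ideal.mul_mem_mul hc hr)

theorem mem_symbolicFiltration_of_mul_mem (hc : c ∈ I) (hd : d ∈ I)
    (hsq : I ^ 2 ≤ Ideal.span {d} * m ⊔ Ideal.span {c} * I) (hcreg : IsSMulRegular R c)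
    (hdreg : IsSMulRegular (R ⧸ Ideal.span {c}) d) (n : ℕ) {r : R}
    (hr : c * r ∈ symbolicFiltration I d (n + 1)) : r ∈ symbolicFiltration I d n := by
  have split : ∀ {n r}, c * r ∈ symbolicFiltration I d (n + 2) → ∃ s t,
      c * s ∈ symbolicFiltration I d n ∧ t ∈ symbolicFiltration I d (n + 1) ∧ r = d * s + t := by
    intro n r hr
    rw [symbolicFiltration_add_two hc hsq] at hr
    simp only [Submodule.mem_sup, Ideal.mem_span_singleton_mul] at hr
    obtain ⟨_, ⟨s, hs, rfl⟩, _, ⟨t, ht, rfl⟩, hst⟩ := hr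
    obtain ⟨w, rfl, hw⟩ := exists_eq_mul_of_mul_eq_mul hcreg hdreg
      (u := s) (v := r - t) (by linear_combination hst)
    exact ⟨w, t, hs, ht, by rw [← hw, sub_add_cancel]⟩
  induction n using Nat.twoStepInduction generalizing r with
  | zero => exact Submodule.mem_top
  | one =>
    obtain ⟨s, t, -, ht, rfl⟩ := split hr
    exact add_mem (Ideal.mul_mem_right s I hd) ht
  | more n ih _ =>
    obtain ⟨s, t, hs, ht, rfl⟩ := split hr
    exact add_mem (mul_mem_symbolicFiltration_add_two (ih hs)) ht

theorem isSMulRegular_quotient_singleton_mul_sup {J : Ideal R}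
    (hxc : IsSMulRegular (R ⧸ Ideal.span {c}) x) (hd : IsSMulRegular (R ⧸ Ideal.span {c, x}) d)
    (hJ : IsSMulRegular (R ⧸ (J ⊔ Ideal.span {c})) x) :
    IsSMulRegular (R ⧸ (Ideal.span {d} * J ⊔ Ideal.span {c})) x := by
  rw [isSMulRegular_quotient_iff_mem_of_smul_mem]
  intro r hr
  simp only [Submodule.mem_sup, Ideal.mem_span_singleton_mul, Ideal.mem_span_singleton'] at hr
  obtain ⟨_, ⟨s, hs, rfl⟩, _, ⟨t, rfl⟩, hst⟩ := hr
  rw [smul_eq_mul] at hst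
  obtain ⟨v, u, hvu⟩ := Ideal.mem_span_pair.1 (mem_of_isSMulRegular_quotient_of_smul_mem hd
    (x := s) (Ideal.mem_span_pair.2 ⟨-t, r, by rw [smul_eq_mul]; linear_combination -hst⟩))
  have hxu : x * u ∈ J ⊔ Ideal.span {c} :=
    Submodule.mem_sup.2 ⟨s, hs, -v * c,
      Ideal.mul_mem_left _ _ (Ideal.mem_span_singleton_self c), by linear_combination -hvu⟩
  have hu : u ∈ J ⊔ Ideal.span {c} := mem_of_isSMulRegular_quotient_of_smul_mem hJ hxu
  have hdu : d * u ∈ Ideal.span {d} * J ⊔ Ideal.span {c} := by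
    have hmem := Ideal.mul_mem_mul (Ideal.mem_span_singleton_self d) hu
    rw [Ideal.mul_sup] at hmem
    exact (sup_le_sup_left Ideal.mul_le_right _ : _ ≤ Ideal.span {d} * J ⊔ Ideal.span {c}) hmem
  have hr : r - d * u ∈ Ideal.span {c} :=
    mem_of_isSMulRegular_quotient_of_smul_mem hxc (Ideal.mem_span_singleton'.2
      ⟨d * v + t, by rw [smul_eq_mul]; linear_combination hst + d * hvu⟩)
  exact (sub_add_cancel r (d * u)) ▸ add_mem (Ideal.mem_sup_right hr) hdu

theorem isSMulRegular_quotient_symbolicFiltration_sup (hc : c ∈ I)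
    (hsq : I ^ 2 ≤ Ideal.span {d} * m ⊔ Ideal.span {c} * I)
    (hxc : IsSMulRegular (R ⧸ Ideal.span {c}) x) (hd : IsSMulRegular (R ⧸ Ideal.span {c, x}) d)
    (hI : IsSMulRegular (R ⧸ I) x) (n : ℕ) :
    IsSMulRegular (R ⧸ (symbolicFiltration I d n ⊔ Ideal.span {c})) x := by
  induction n using Nat.twoStepInduction with
  | zero => rw [symbolicFiltration, top_sup_eq]; exact Function.injective_of_subsingleton _
  | one =>
    rwa [symbolicFiltration, sup_eq_left.2 ((Ideal.span_singleton_le_iff_mem I).2 hc)]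
  | more n ih _ =>
    rw [symbolicFiltration_add_two hc hsq, sup_assoc,
      sup_eq_right.2 (Ideal.mul_le_left : Ideal.span {c} * _ ≤ Ideal.span {c})]
    exact isSMulRegular_quotient_singleton_mul_sup hxc hd ih

theorem isSMulRegular_quotient_symbolicFiltration (hc : c ∈ I) (hd : d ∈ I)
    (hsq : I ^ 2 ≤ Ideal.span {d} * m ⊔ Ideal.span {c} * I) (hcreg : IsSMulRegular R c)
    (hdreg : IsSMulRegular (R ⧸ Ideal.span {c}) d)
    (hxc : IsSMulRegular (R ⧸ Ideal.span {c}) x)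
    (hdcx : IsSMulRegular (R ⧸ Ideal.span {c, x}) d)
    (hI : IsSMulRegular (R ⧸ I) x) (n : ℕ) :
    IsSMulRegular (R ⧸ symbolicFiltration I d n) x := by
  induction n with
  | zero => rw [symbolicFiltration]; exact Function.injective_of_subsingleton _
  | succ n ih =>
    have hsup := isSMulRegular_quotient_symbolicFiltration_sup hc hsq hxc hdcx hI (n + 1)
    rw [isSMulRegular_quotient_iff_mem_of_smul_mem] at ih hsup ⊢
    intro r hr
    obtain ⟨s, hs, _, ht, rfl⟩ := Submodule.mem_sup.1 (hsup r (Ideal.mem_sup_left hr))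
    obtain ⟨t, rfl⟩ := Ideal.mem_span_singleton.1 ht
    rw [smul_add, smul_eq_mul x (c * t), mul_left_comm] at hr
    have hxt : x * t ∈ symbolicFiltration I d n :=
      mem_symbolicFiltration_of_mul_mem hc hd hsq hcreg hdreg n
        ((Ideal.add_mem_iff_right _ (Submodule.smul_mem _ x hs)).1 hr)
    exact add_mem hs (mul_mem_symbolicFiltration_succ hc (ih t hxt))

theorem exists_eq_mul_add_of_mul_mem_pow
    (hsq : I ^ 2 ≤ Ideal.span {d} * m ⊔ Ideal.span {c} * I) (hcreg : IsSMulRegular R c)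
    (hdreg : IsSMulRegular (R ⧸ Ideal.span {c}) d) {n : ℕ} {r : R} (hr : d * r ∈ I ^ (n + 2)) :
    ∃ u, ∃ s ∈ m * I ^ n, r = c * u + s ∧ d * u ∈ I ^ (n + 1) := by
  replace hr := pow_add_two_le hsq n hr
  simp only [Submodule.mem_sup, Ideal.mem_span_singleton_mul] at hr
  obtain ⟨_, ⟨s, hs, rfl⟩, _, ⟨t, ht, rfl⟩, hst⟩ := hr
  obtain ⟨u, hu, rfl⟩ := exists_eq_mul_of_mul_eq_mul hcreg hdreg
    (u := r - s) (v := t) (by linear_combination -hst)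
  exact ⟨u, s, hs, sub_eq_iff_eq_add.1 hu, ht⟩

theorem mul_mem_pow_add_two_iff (hIm : I ≤ m) (hc : c ∈ I) (hmd : m * Ideal.span {d} ≤ I ^ 2)
    (hsq : I ^ 2 ≤ Ideal.span {d} * m ⊔ Ideal.span {c} * I) (hcreg : IsSMulRegular R c)
    (hdreg : IsSMulRegular (R ⧸ Ideal.span {c}) d) (n : ℕ) {r : R} :
    d * r ∈ I ^ (n + 2) ↔ r ∈ m * I ^ n := by
  refine ⟨fun hr ↦ ?_, fun hr ↦ ?_⟩
  · induction n generalizing r with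
    | zero =>
      obtain ⟨u, s, hs, rfl, -⟩ := exists_eq_mul_add_of_mul_mem_pow hsq hcreg hdreg hr
      exact add_mem (by simpa using Ideal.mul_mem_right u m (hIm hc)) hs
    | succ n ih =>
      obtain ⟨u, s, hs, rfl, hu⟩ := exists_eq_mul_add_of_mul_mem_pow hsq hcreg hdreg hr
      refine add_mem ?_ hs
      rw [pow_succ', mul_left_comm]
      exact Ideal.mul_mem_mul hc (ih hu)
  · have hle : Ideal.span {d} * (m * I ^ n) ≤ I ^ (n + 2) := by
      rw [← mul_assoc, mul_comm _ m, add_comm, pow_add]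
      exact Ideal.mul_mono_left hmd
    exact hle (Ideal.mul_mem_mul (Ideal.mem_span_singleton_self d) hr)

end SymbolicFiltration

section SymbolicPower

variable {R : Type*} [CommRing R] {I J : Ideal R} {n : ℕ} {x : R}

theorem mem_symbolicPower_iff {r : R} :
    r ∈ symbolicPower I n ↔ ∀ p ∈ I.minimalPrimes, ∃ s ∉ p, s * r ∈ I ^ n := by
  rw [symbolicPower, Ideal.mem_iInf, Subtype.forall]
  refine forall₂_congr fun p hp ↦ ?_
  have : p.IsPrime := hp.1.1
  rw [Ideal.mem_comap, IsLocalization.mem_map_algebraMap_iff p.primeCompl]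
  constructor
  · rintro ⟨⟨⟨i, hi⟩, s⟩, his⟩
    rw [← map_mul, IsLocalization.eq_iff_exists p.primeCompl] at his
    obtain ⟨t, ht⟩ := his
    refine ⟨t * s, (t * s).2, ?_⟩
    rw [mul_assoc, mul_comm (s : R), ht]
    exact Ideal.mul_mem_left _ _ hi
  · rintro ⟨s, hs, hsr⟩
    exact ⟨⟨⟨s * r, hsr⟩, s, hs⟩, by rw [← map_mul, mul_comm]⟩

theorem symbolicPower_le (hIJ : I ^ n ≤ J) (hJ : IsSMulRegular (R ⧸ J) x)
    (hx : ∀ q : Ideal R, q.IsPrime → I ≤ q → q ∉ I.minimalPrimes → x ∈ q) :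
    symbolicPower I n ≤ J := by
  intro r hr
  rw [mem_symbolicPower_iff] at hr
  have hcolon : ∀ {s}, s ∈ J.colon {r} ↔ s * r ∈ J := Submodule.mem_colon_singleton
  have hrad : x ∈ (J.colon {r}).radical := by
    rw [Ideal.radical_eq_sInf, Submodule.mem_sInf]
    rintro q ⟨hq, hqprime⟩
    have hIq : I ^ n ≤ q := fun s hs ↦ hq (hcolon.2 (Ideal.mul_mem_right r J (hIJ hs)))
    refine hx q hqprime (hqprime.le_of_pow_le hIq) fun hqmin ↦ ?_
    obtain ⟨s, hsq, hsr⟩ := hr q hqmin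
    exact hsq (hq (hcolon.2 (hIJ hsr)))
  obtain ⟨k, hk⟩ := hrad
  exact mem_of_isSMulRegular_quotient_of_smul_mem (hJ.pow k) (hcolon.1 hk)

variable [IsLocalRing R]

theorem le_symbolicPower (hm : maximalIdeal R ∉ I.minimalPrimes) {k : ℕ}
    (hJ : maximalIdeal R ^ k * J ≤ I ^ n) : J ≤ symbolicPower I n := by
  refine fun r hr ↦ mem_symbolicPower_iff.2 fun p hp ↦ ?_
  have hprime : p.IsPrime := hp.1.1
  obtain ⟨s, hs, hsp⟩ := Set.exists_of_ssubset
    ((le_maximalIdeal hprime.ne_top).lt_of_ne fun hpm ↦ hm (hpm ▸ hp))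
  exact ⟨s ^ k, fun hsk ↦ hsp (hprime.mem_of_pow_mem k hsk),
    hJ (Ideal.mul_mem_mul (Ideal.pow_mem_pow hs k) hr)⟩

theorem maximalIdeal_notMem_minimalPrimes (hxm : x ∈ maximalIdeal R)
    (hI : IsSMulRegular (R ⧸ I) x) : maximalIdeal R ∉ I.minimalPrimes := by
  intro hm
  have hrad : x ∈ I.radical := by
    rw [Ideal.radical_eq_sInf, Submodule.mem_sInf]
    exact fun q ⟨hIq, hq⟩ ↦ hm.2 ⟨hq, hIq⟩ (le_maximalIdeal hq.ne_top) hxm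
  obtain ⟨k, hk⟩ := hrad
  have hone : (1 : R) ∈ I :=
    mem_of_isSMulRegular_quotient_of_smul_mem (hI.pow k) (by simpa using hk)
  exact (maximalIdeal.isMaximal R).ne_top
    ((Ideal.eq_top_iff_one _).2 (hm.1.2 hone))

theorem mem_of_isPrime_of_notMem_minimalPrimes [IsNoetherianRing R] (hxm : x ∈ maximalIdeal R)
    (hmax : ∀ q : Ideal R, q.IsPrime → I ≤ q → x ∈ q → maximalIdeal R ≤ q) {q : Ideal R}
    (hq : q.IsPrime) (hIq : I ≤ q) (hqmin : q ∉ I.minimalPrimes) : x ∈ q := by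
  by_contra hxq
  obtain ⟨p, hp, hpq⟩ := Ideal.exists_minimalPrimes_le hIq
  have hqm : q < maximalIdeal R :=
    (le_maximalIdeal hq.ne_top).lt_of_ne fun hqm ↦ hxq (hqm ▸ hxm)
  have hm : maximalIdeal R ∈ (Ideal.span (insert x (p : Set R))).minimalPrimes := by
    refine ⟨⟨inferInstance, Ideal.span_le.2 (Set.insert_subset hxm (hpq.trans hqm.le))⟩,
      fun q' hq' _ ↦ ?_⟩
    obtain ⟨hxq', hpq'⟩ := Set.insert_subset_iff.1 (Ideal.span_le.1 hq'.2)
    exact hmax q' hq'.1 (hp.1.2.trans hpq') hxq'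
  have hqp := Ideal.mem_minimalPrimes_span_of_mem_minimalPrimes_span_insert hqm x p hm p hpq
    fun s hs ↦ Ideal.le_radical (Ideal.subset_span (Set.mem_insert_of_mem _ hs))
  rw [Ideal.span_eq] at hqp
  exact hqmin (hpq.antisymm (hqp.2 ⟨hp.1.1, le_rfl⟩ hpq) ▸ hp)

theorem symbolicPower_eq_of_isSMulRegular [IsNoetherianRing R] (hxm : x ∈ maximalIdeal R)
    (hmax : ∀ q : Ideal R, q.IsPrime → I ≤ q → x ∈ q → maximalIdeal R ≤ q)
    (hI : IsSMulRegular (R ⧸ I) x) (hJ : IsSMulRegular (R ⧸ J) x) (hIJ : I ^ n ≤ J) {k : ℕ}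
    (hJI : maximalIdeal R ^ k * J ≤ I ^ n) : symbolicPower I n = J :=
  (symbolicPower_le hIJ hJ fun _ ↦ mem_of_isPrime_of_notMem_minimalPrimes hxm hmax).antisymm
    (le_symbolicPower (maximalIdeal_notMem_minimalPrimes hxm hI) hJI)

end SymbolicPower

/-- The length of the `R`-module `K / (J ∩ K)`. -/
noncomputable def relLength {R : Type*} [CommRing R] (J K : Ideal R) : ℕ∞ :=
  Module.length R (K ⧸ Submodule.comap K.subtype J)

section RelLength

variable {R : Type*} [CommRing R]

theorem relLength_self (J : Ideal R) : relLength J J = 0 := by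
  rw [relLength, Module.length_eq_zero_iff, Submodule.Quotient.subsingleton_iff,
    Submodule.comap_subtype_self]

theorem relLength_add_relLength {J K L : Ideal R} (hJK : J ≤ K) (hKL : K ≤ L) :
    relLength J K + relLength K L = relLength J L := by
  refine (Module.length_eq_add_of_exact
    (Submodule.mapQ (Submodule.comap K.subtype J) (Submodule.comap L.subtype J)
      (Submodule.inclusion hKL) fun _ hr ↦ hr)
    (Submodule.mapQ (Submodule.comap L.subtype J) (Submodule.comap L.subtype K)
      LinearMap.id fun _ hr ↦ hJK hr) ?_ ?_ ?_).symm
  · rw [← LinearMap.ker_eq_bot, LinearMap.ker_eq_bot']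
    rintro ⟨r, hr⟩ h
    have hJ : r ∈ J := (Submodule.Quotient.mk_eq_zero (Submodule.comap L.subtype J)).1 h
    exact (Submodule.Quotient.mk_eq_zero (Submodule.comap K.subtype J)).2 hJ
  · rintro ⟨r⟩
    exact ⟨Submodule.Quotient.mk r, rfl⟩
  · rintro ⟨r⟩
    constructor
    · intro h
      have hK : (r : R) ∈ K := (Submodule.Quotient.mk_eq_zero (Submodule.comap L.subtype K)).1 h
      exact ⟨Submodule.Quotient.mk ⟨r, hK⟩, rfl⟩
    · rintro ⟨⟨s⟩, hs⟩
      have hsr : (s : R) - r ∈ J := (Submodule.Quotient.eq (Submodule.comap L.subtype J)).1 hs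
      have hK : (r : R) ∈ K := by simpa using sub_mem s.2 (hJK hsr)
      exact (Submodule.Quotient.mk_eq_zero (Submodule.comap L.subtype K)).2 hK

theorem relLength_span_singleton_mul_sup {J K N : Ideal R} {f : R}
    (hf : ∀ r ∈ K, f * r ∈ N ↔ r ∈ J) :
    relLength N (Ideal.span {f} * K ⊔ N) = relLength J K := by
  have hmul : ∀ r ∈ K, f * r ∈ Ideal.span {f} * K ⊔ N := fun r hr ↦
    Ideal.mem_sup_left (Ideal.mul_mem_mul (Ideal.mem_span_singleton_self f) hr)
  let φ : K →ₗ[R] ↥(Ideal.span {f} * K ⊔ N) ⧸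
      Submodule.comap (Ideal.span {f} * K ⊔ N).subtype N :=
    (Submodule.mkQ _).comp ((LinearMap.mulLeft R f).restrict hmul)
  have hsurj : Function.Surjective φ := by
    rintro ⟨s, hs⟩
    obtain ⟨_, hfr, t, ht, rfl⟩ := Submodule.mem_sup.1 hs
    obtain ⟨r, hr, rfl⟩ := Ideal.mem_span_singleton_mul.1 hfr
    refine ⟨⟨r, hr⟩, ((Submodule.Quotient.eq _).2 ?_).symm⟩
    change f * r + t - f * r ∈ N
    rwa [add_sub_cancel_left]
  have hker : LinearMap.ker φ = Submodule.comap K.subtype J := by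
    ext r
    exact (Submodule.Quotient.mk_eq_zero _).trans (hf r r.2)
  rw [relLength, relLength, ← hker]
  exact (φ.quotKerEquivOfSurjective hsurj).length_eq.symm

theorem relLength_sup {J K N : Ideal R} (h : ∀ r ∈ K, r ∈ N ↔ r ∈ J) :
    relLength N (K ⊔ N) = relLength J K := by
  simpa using relLength_span_singleton_mul_sup (f := 1) (K := K) (by simpa using h)

theorem relLength_top (J : Ideal R) : relLength J ⊤ = Module.length R (R ⧸ J) := by
  have e : Submodule.map (Submodule.topEquiv (R := R) (M := R)).toLinearMap
      (Submodule.comap (⊤ : Submodule R R).subtype J) = J := by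
    ext r
    simp
  exact (Submodule.Quotient.equiv _ _ _ e).length_eq

theorem relLength_maximalIdeal_top [IsLocalRing R] : relLength (maximalIdeal R) ⊤ = 1 := by
  rw [relLength_top, Module.length_eq_one_iff, isSimpleModule_iff_isCoatom]
  exact Ideal.isMaximal_def.1 (maximalIdeal.isMaximal R)

theorem hasLength_of_length_eq {M : Type*} [AddCommGroup M] [Module R M] {n : ℕ}
    (h : Module.length R M = n) : HasLength R M n := by
  obtain ⟨s, hs₀, hs₁⟩ := isFiniteLength_iff_exists_compositionSeries.1
    (Module.length_ne_top_iff.1 (h ▸ ENat.natCast_ne_top n))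
  refine ⟨s, hs₀, hs₁, ?_⟩
  rw [← Module.length_compositionSeries s hs₀ hs₁] at h
  exact_mod_cast h

end RelLength

section SymbolicFiltrationLength

variable {R : Type*} [CommRing R] {I m : Ideal R} {d : R}

theorem sum_Icc_choose_add_two (n : ℕ) :
    ∑ k ∈ Finset.Icc 1 ((n + 2) / 2), (n + 2 - 2 * k + 2).choose 2 =
      (n + 2).choose 2 + ∑ k ∈ Finset.Icc 1 (n / 2), (n - 2 * k + 2).choose 2 := by
  rw [Nat.add_div_right n two_pos, ← Finset.Ico_add_one_right_eq_Icc,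
    ← Finset.Ico_add_one_right_eq_Icc, Finset.sum_eq_sum_Ico_succ_bot (by simp),
    ← Finset.sum_Ico_add']
  refine congrArg₂ _ rfl (Finset.sum_congr rfl fun k _ ↦ ?_)
  congr 1
  omega

theorem relLength_pow_symbolicFiltration (hd : ∀ n, ∀ r, d * r ∈ I ^ (n + 2) ↔ r ∈ m * I ^ n)
    (hm : ∀ n, relLength (m * I ^ n) (I ^ n) = ((n + 2).choose 2 : ℕ)) (n : ℕ) :
    relLength (I ^ n) (symbolicFiltration I d n) =
      (∑ k ∈ Finset.Icc 1 (n / 2), (n - 2 * k + 2).choose 2 : ℕ) := by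
  induction n using Nat.twoStepInduction with
  | zero => simpa [symbolicFiltration] using relLength_self (⊤ : Ideal R)
  | one => simpa [symbolicFiltration] using relLength_self I
  | more n ih _ =>
    calc relLength (I ^ (n + 2)) (symbolicFiltration I d (n + 2))
        = relLength (m * I ^ n) (symbolicFiltration I d n) :=
          relLength_span_singleton_mul_sup fun r _ ↦ hd n r
      _ = relLength (m * I ^ n) (I ^ n) + relLength (I ^ n) (symbolicFiltration I d n) :=
          (relLength_add_relLength Ideal.mul_le_right (pow_le_symbolicFiltration n)).symm
      _ = _ := by rw [hm, ih, ← Nat.cast_add, ← sum_Icc_choose_add_two]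

end SymbolicFiltrationLength

section FiberCone

variable {R : Type*} [CommRing R] {a b c : R} {P Q : Ideal R}

theorem sup_pow_succ (J K : Ideal R) (n : ℕ) :
    (J ⊔ K) ^ (n + 1) = J ^ (n + 1) ⊔ K * (J ⊔ K) ^ n := by
  refine le_antisymm ?_ (sup_le (Ideal.pow_right_mono le_sup_left _) ?_)
  · induction n with
    | zero => simp
    | succ n ih =>
      rw [pow_succ' _ (n + 1), Ideal.sup_mul]
      refine sup_le ((Ideal.mul_mono_right ih).trans ?_) le_sup_right
      rw [Ideal.mul_sup, ← pow_succ', mul_left_comm]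
      refine sup_le_sup_left (Ideal.mul_mono_right ?_) _
      rw [pow_succ']
      exact Ideal.mul_mono_left le_sup_left
  · rw [pow_succ']
    exact Ideal.mul_mono_left le_sup_right

theorem mul_span_triple_pow_succ (Q : Ideal R) (n : ℕ) :
    Q * Ideal.span {a, b, c} ^ (n + 1) =
      Q * Ideal.span {a, b} ^ (n + 1) ⊔ Ideal.span {c} * (Q * Ideal.span {a, b, c} ^ n) := by
  have hI : Ideal.span {a, b, c} = Ideal.span {a, b} ⊔ Ideal.span {c} := by
    rw [← Ideal.span_union, Set.insert_union, Set.singleton_union]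
  rw [hI, sup_pow_succ, Ideal.mul_sup, mul_left_comm]

theorem mul_span_pair_pow_succ (Q : Ideal R) (n : ℕ) :
    Q * Ideal.span {a, b} ^ (n + 1) =
      Ideal.span {a ^ (n + 1)} * Q ⊔ Ideal.span {b} * (Q * Ideal.span {a, b} ^ n) := by
  rw [Ideal.span_insert, sup_pow_succ, Ideal.mul_sup, mul_left_comm,
    Ideal.span_singleton_pow, mul_comm Q]

theorem exists_eq_add_of_mem_mul_span_pair_pow_succ {n : ℕ} {w : R}
    (hw : w ∈ Q * Ideal.span {a, b} ^ (n + 1)) :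
    ∃ q ∈ Q, ∃ t ∈ Q * Ideal.span {a, b} ^ n, w = a ^ (n + 1) * q + b * t := by
  rw [mul_span_pair_pow_succ] at hw
  obtain ⟨_, hu, _, hv, rfl⟩ := Submodule.mem_sup.1 hw
  obtain ⟨q, hq, rfl⟩ := Ideal.mem_span_singleton_mul.1 hu
  obtain ⟨t, ht, rfl⟩ := Ideal.mem_span_singleton_mul.1 hv
  exact ⟨q, hq, t, ht, rfl⟩

theorem exists_eq_add_of_mem_span_pair_of_mem_mul_span_pair_pow (hbc : Ideal.span {b, c} ≤ P)
    (ha : IsSMulRegular (R ⧸ P) a) (hP : Ideal.span {a} * P ≤ Q * Ideal.span {b, c}) {n : ℕ}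
    {w : R} (hw : w ∈ Q * Ideal.span {a, b} ^ (n + 1)) (hwbc : w ∈ Ideal.span {b, c}) :
    ∃ t ∈ Q * Ideal.span {a, b} ^ n, ∃ s ∈ Q * Ideal.span {a, b, c} ^ n, w = b * t + c * s := by
  obtain ⟨q, -, t, ht, rfl⟩ := exists_eq_add_of_mem_mul_span_pair_pow_succ hw
  have hbt : b * t ∈ Ideal.span {b, c} := Ideal.mul_mem_right _ _ (Ideal.subset_span (by simp))
  have hq : q ∈ P := mem_of_isSMulRegular_quotient_of_smul_mem (ha.pow (n + 1))
    (hbc ((Ideal.add_mem_iff_left _ hbt).1 hwbc))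
  have hqa : a * q ∈ Q * Ideal.span {b, c} :=
    hP (Ideal.mul_mem_mul (Ideal.mem_span_singleton_self a) hq)
  rw [Ideal.span_insert, Ideal.mul_sup, mul_comm Q, mul_comm Q] at hqa
  simp only [Submodule.mem_sup, Ideal.mem_span_singleton_mul] at hqa
  obtain ⟨_, ⟨u, hu, rfl⟩, _, ⟨v, hv, rfl⟩, huv⟩ := hqa
  exact ⟨u * a ^ n + t,
    add_mem (Ideal.mul_mem_mul hu (Ideal.pow_mem_pow (Ideal.subset_span (by simp)) n)) ht,
    v * a ^ n, Ideal.mul_mem_mul hv (Ideal.pow_mem_pow (Ideal.subset_span (by simp)) n),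
    by linear_combination -a ^ n * huv⟩

theorem mem_span_singleton_mul_of_mem_mul_span_pair_pow
    (hb : IsSMulRegular (R ⧸ Ideal.span {c}) b) (hbc : Ideal.span {b, c} ≤ P)
    (ha : IsSMulRegular (R ⧸ P) a) (hPQ : P ≤ Q)
    (hP : Ideal.span {a} * P ≤ Q * Ideal.span {b, c}) {n : ℕ} {w : R}
    (hw : w ∈ Q * Ideal.span {a, b} ^ (n + 1)) (hwc : w ∈ Ideal.span {c}) :
    w ∈ Ideal.span {c} * (Q * Ideal.span {a, b, c} ^ n) := by
  have hc : Ideal.span {c} ≤ Ideal.span {b, c} := Ideal.span_mono (by simp)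
  have split : ∀ {n w}, w ∈ Q * Ideal.span {a, b} ^ (n + 1) → w ∈ Ideal.span {c} →
      ∃ t ∈ Q * Ideal.span {a, b} ^ n, t ∈ Ideal.span {c} ∧
        ∃ s ∈ Q * Ideal.span {a, b, c} ^ n, w = b * t + c * s := by
    intro n w hw hwc
    obtain ⟨t, ht, s, hs, rfl⟩ :=
      exists_eq_add_of_mem_span_pair_of_mem_mul_span_pair_pow hbc ha hP hw (hc hwc)
    refine ⟨t, ht, mem_of_isSMulRegular_quotient_of_smul_mem hb ?_, s, hs, rfl⟩
    exact (Ideal.add_mem_iff_left _ (Ideal.mem_span_singleton.2 ⟨s, rfl⟩)).1 hwc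
  induction n generalizing w with
  | zero =>
    obtain ⟨t, -, htc, s, hs, rfl⟩ := split hw hwc
    obtain ⟨e, rfl⟩ := Ideal.mem_span_singleton.1 htc
    have hbQ : b ∈ Q := hPQ (hbc (Ideal.subset_span (by simp)))
    rw [pow_zero, mul_one] at hs ⊢
    exact Ideal.mem_span_singleton_mul.2
      ⟨b * e + s, add_mem (Ideal.mul_mem_right e Q hbQ) hs, by ring⟩
  | succ n ih =>
    obtain ⟨t, ht, htc, s, hs, rfl⟩ := split hw hwc
    refine add_mem ?_ (Ideal.mul_mem_mul (Ideal.mem_span_singleton_self c) hs)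
    have hbI : b ∈ Ideal.span {a, b, c} := Ideal.subset_span (by simp)
    have hbt := Ideal.mul_mem_mul hbI (ih ht htc)
    rwa [mul_left_comm, mul_left_comm _ Q, ← pow_succ'] at hbt

theorem mem_mul_span_triple_pow_of_mul_mem (hcreg : IsSMulRegular R c)
    (hb : IsSMulRegular (R ⧸ Ideal.span {c}) b) (hbc : Ideal.span {b, c} ≤ P)
    (ha : IsSMulRegular (R ⧸ P) a) (hPQ : P ≤ Q)
    (hP : Ideal.span {a} * P ≤ Q * Ideal.span {b, c}) {n : ℕ} {r : R}
    (hr : c * r ∈ Q * Ideal.span {a, b, c} ^ (n + 1)) : r ∈ Q * Ideal.span {a, b, c} ^ n := by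
  rw [mul_span_triple_pow_succ] at hr
  obtain ⟨w, hw, v, hv, hwv⟩ := Submodule.mem_sup.1 hr
  have hwc : w ∈ Ideal.span {c} := by
    rw [← Ideal.add_mem_iff_left _ (Ideal.mul_le_left hv : v ∈ Ideal.span {c}), hwv]
    exact Ideal.mem_span_singleton.2 ⟨r, rfl⟩
  obtain ⟨s, hs, hsr⟩ := Ideal.mem_span_singleton_mul.1 (hwv ▸ add_mem
    (mem_span_singleton_mul_of_mem_mul_span_pair_pow hb hbc ha hPQ hP hw hwc) hv)
  exact hcreg hsr ▸ hs

theorem mul_mem_mul_span_pair_pow_succ_sup_iff (hb : IsSMulRegular (R ⧸ Ideal.span {c}) b)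
    (hbc : Ideal.span {b, c} ≤ P) (ha : IsSMulRegular (R ⧸ P) a)
    (hP : Ideal.span {a} * P ≤ Q * Ideal.span {b, c}) {n : ℕ} {r : R} :
    b * r ∈ Q * Ideal.span {a, b} ^ (n + 1) ⊔ Ideal.span {c} ↔
      r ∈ Q * Ideal.span {a, b} ^ n ⊔ Ideal.span {c} := by
  have hc : Ideal.span {c} ≤ Ideal.span {b, c} := Ideal.span_mono (by simp)
  have hbmem : b ∈ Ideal.span {b, c} := Ideal.subset_span (by simp)
  refine ⟨fun hr ↦ ?_, fun hr ↦ ?_⟩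
  · obtain ⟨w, hw, e, he, hwe⟩ := Submodule.mem_sup.1 hr
    have hwbc : w ∈ Ideal.span {b, c} := by
      rw [← Ideal.add_mem_iff_left _ (hc he), hwe]
      exact Ideal.mul_mem_right r _ hbmem
    obtain ⟨t, ht, s, -, rfl⟩ :=
      exists_eq_add_of_mem_span_pair_of_mem_mul_span_pair_pow hbc ha hP hw hwbc
    have hrt : r - t ∈ Ideal.span {c} := by
      refine mem_of_isSMulRegular_quotient_of_smul_mem hb ?_
      have hbrt : b • (r - t) = c * s + e := by
        rw [smul_eq_mul]; linear_combination -hwe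
      exact hbrt ▸ add_mem (Ideal.mem_span_singleton.2 ⟨s, rfl⟩) he
    exact add_sub_cancel t r ▸ Submodule.add_mem_sup ht hrt
  · have hmem := Ideal.mul_mem_mul (Ideal.mem_span_singleton_self b) hr
    rw [Ideal.mul_sup] at hmem
    refine (sup_le_sup ?_ Ideal.mul_le_right :
      _ ≤ Q * Ideal.span {a, b} ^ (n + 1) ⊔ Ideal.span {c}) hmem
    exact le_sup_right.trans (mul_span_pair_pow_succ Q n).ge

theorem span_singleton_mul_sup_mul_span_pair_pow_succ_sup (Q : Ideal R) (n : ℕ) :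
    Ideal.span {b} * (Ideal.span {a, b} ^ n ⊔ Ideal.span {c}) ⊔
        (Q * Ideal.span {a, b} ^ (n + 1) ⊔ Ideal.span {c}) =
      Ideal.span {a ^ (n + 1)} * Q ⊔ (Ideal.span {b} * Ideal.span {a, b} ^ n ⊔ Ideal.span {c}) := by
  have hbc : Ideal.span {b} * Ideal.span {c} ≤ Ideal.span {c} := Ideal.mul_le_right
  have hbQ : Ideal.span {b} * (Q * Ideal.span {a, b} ^ n) ≤
      Ideal.span {b} * Ideal.span {a, b} ^ n := Ideal.mul_mono_right Ideal.mul_le_right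
  rw [mul_span_pair_pow_succ, Ideal.mul_sup]
  refine le_antisymm ?_ ?_
  · exact sup_le (sup_le (le_sup_of_le_right le_sup_left)
      (le_sup_of_le_right (le_sup_of_le_right hbc)))
      (sup_le (sup_le_sup_left (le_sup_of_le_left hbQ) _) (le_sup_of_le_right le_sup_right))
  · exact sup_le (le_sup_of_le_right (le_sup_of_le_left le_sup_left))
      (sup_le_sup le_sup_left le_sup_right)

theorem mem_of_pow_mul_mem (hbc : Ideal.span {b, c} ≤ P)
    (ha : IsSMulRegular (R ⧸ P) a) (hPQ : P ≤ Q) {n : ℕ} {r : R}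
    (hr : a ^ n * r ∈ Ideal.span {a ^ n} * Q ⊔ Ideal.span {b, c}) : r ∈ Q := by
  simp only [Submodule.mem_sup, Ideal.mem_span_singleton_mul] at hr
  obtain ⟨_, ⟨q, hq, rfl⟩, s, hs, hqs⟩ := hr
  have hrq : r - q ∈ P := by
    refine mem_of_isSMulRegular_quotient_of_smul_mem (ha.pow n) (hbc ?_)
    rwa [smul_eq_mul, mul_sub, ← hqs, add_sub_cancel_left]
  exact add_sub_cancel q r ▸ add_mem hq (hPQ hrq)

theorem relLength_span_triple_pow_succ (hcreg : IsSMulRegular R c)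
    (hb : IsSMulRegular (R ⧸ Ideal.span {c}) b) (hbc : Ideal.span {b, c} ≤ P)
    (ha : IsSMulRegular (R ⧸ P) a) (hP : Ideal.span {a} * P ≤ Ideal.span {b, c}) (n : ℕ) :
    relLength (Ideal.span {c} * Ideal.span {a, b, c} ^ n ⊔ Q * Ideal.span {a, b, c} ^ (n + 1))
        (Ideal.span {a, b, c} ^ (n + 1)) =
      relLength (Q * Ideal.span {a, b} ^ (n + 1) ⊔ Ideal.span {c})
        (Ideal.span {a, b} ^ (n + 1) ⊔ Ideal.span {c}) := by
  have hJI : Ideal.span {a, b} ^ (n + 1) ≤ Ideal.span {a, b, c} ^ (n + 1) :=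
    Ideal.pow_right_mono (Ideal.span_mono (by simp [Set.insert_subset_insert])) _
  have hIJ : Ideal.span {a, b, c} ^ (n + 1) ≤ Ideal.span {a, b} ^ (n + 1) ⊔ Ideal.span {c} := by
    have hI := mul_span_triple_pow_succ (a := a) (b := b) (c := c) ⊤ n
    rw [Ideal.top_mul, Ideal.top_mul, Ideal.top_mul] at hI
    exact hI.trans_le (sup_le_sup_left Ideal.mul_le_left _)
  have hsup : Ideal.span {a, b, c} ^ (n + 1) ⊔ (Q * Ideal.span {a, b} ^ (n + 1) ⊔ Ideal.span {c}) =
      Ideal.span {a, b} ^ (n + 1) ⊔ Ideal.span {c} :=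
    le_antisymm (sup_le hIJ (sup_le_sup_right Ideal.mul_le_right _))
      (sup_le (hJI.trans le_sup_left) (le_sup_of_le_right le_sup_right))
  rw [← hsup]
  refine (relLength_sup fun r hr ↦ ⟨fun hrN ↦ ?_, fun hrN ↦ ?_⟩).symm
  · obtain ⟨w, hw, _, he, rfl⟩ := Submodule.mem_sup.1 hrN
    obtain ⟨e, rfl⟩ := Ideal.mem_span_singleton.1 he
    have hce : c * e ∈ Ideal.span {a, b, c} ^ (n + 1) :=
      (Ideal.add_mem_iff_right _ (hJI (Ideal.mul_le_right hw))).1 hr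
    have he : e ∈ Ideal.span {a, b, c} ^ n := by
      rw [← Ideal.top_mul (Ideal.span _ ^ _)] at hce ⊢
      exact mem_mul_span_triple_pow_of_mul_mem hcreg hb hbc ha le_top (by rwa [Ideal.top_mul]) hce
    exact add_mem (Ideal.mem_sup_right (Ideal.mul_mono_right hJI hw))
      (Ideal.mem_sup_left (Ideal.mul_mem_mul (Ideal.mem_span_singleton_self c) he))
  · rw [mul_span_triple_pow_succ] at hrN
    exact SetLike.le_def.1 (sup_le (le_sup_of_le_right Ideal.mul_le_left)
      (sup_le_sup_left Ideal.mul_le_left _)) hrN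

section IsLocalRing

variable [IsLocalRing R]

theorem relLength_span_pair_pow_sup (hb : IsSMulRegular (R ⧸ Ideal.span {c}) b)
    (hbc : Ideal.span {b, c} ≤ P) (ha : IsSMulRegular (R ⧸ P) a) (hPm : P ≤ maximalIdeal R)
    (hP : Ideal.span {a} * P ≤ maximalIdeal R * Ideal.span {b, c}) (n : ℕ) :
    relLength (maximalIdeal R * Ideal.span {a, b} ^ n ⊔ Ideal.span {c})
      (Ideal.span {a, b} ^ n ⊔ Ideal.span {c}) = (n + 1 : ℕ) := by
  induction n with
  | zero =>
    have hc : Ideal.span {c} ≤ maximalIdeal R :=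
      (Ideal.span_mono (by simp)).trans (hbc.trans hPm)
    simpa [sup_eq_left.2 hc] using relLength_maximalIdeal_top (R := R)
  | succ n ih =>
    set N := maximalIdeal R * Ideal.span {a, b} ^ (n + 1) ⊔ Ideal.span {c}
    set M := Ideal.span {b} * (Ideal.span {a, b} ^ n ⊔ Ideal.span {c}) ⊔ N
    have hbot : relLength N M = (n + 1 : ℕ) :=
      (relLength_span_singleton_mul_sup fun r _ ↦
        mul_mem_mul_span_pair_pow_succ_sup_iff hb hbc ha hP).trans ih
    have hMN : M = Ideal.span {a ^ (n + 1)} * maximalIdeal R ⊔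
        (Ideal.span {b} * Ideal.span {a, b} ^ n ⊔ Ideal.span {c}) :=
      span_singleton_mul_sup_mul_span_pair_pow_succ_sup (maximalIdeal R) n
    have htop : relLength M (Ideal.span {a ^ (n + 1)} * ⊤ ⊔ M) = 1 := by
      rw [← relLength_maximalIdeal_top (R := R), hMN]
      refine relLength_span_singleton_mul_sup fun r _ ↦ ⟨fun hr ↦ ?_, fun hr ↦ ?_⟩
      · refine mem_of_pow_mul_mem hbc ha hPm (SetLike.le_def.1 (sup_le_sup_left ?_ _) hr)
        exact Ideal.span_insert b {c} ▸ sup_le_sup_right Ideal.mul_le_left _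
      · exact Ideal.mem_sup_left (Ideal.mul_mem_mul (Ideal.mem_span_singleton_self _) hr)
    have hsup : Ideal.span {a ^ (n + 1)} * ⊤ ⊔ M =
        Ideal.span {a, b} ^ (n + 1) ⊔ Ideal.span {c} := by
      rw [hMN, ← sup_assoc, sup_eq_left.2 (Ideal.mul_mono_right (le_top : maximalIdeal R ≤ ⊤)),
        ← sup_assoc]
      simpa only [Ideal.top_mul] using
        congrArg (· ⊔ Ideal.span {c}) (mul_span_pair_pow_succ (a := a) (b := b) ⊤ n).symm
    rw [← hsup, ← relLength_add_relLength le_sup_right le_sup_right, hbot, htop]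
    rfl

theorem relLength_span_triple_pow (hcreg : IsSMulRegular R c)
    (hb : IsSMulRegular (R ⧸ Ideal.span {c}) b) (hbc : Ideal.span {b, c} ≤ P)
    (ha : IsSMulRegular (R ⧸ P) a) (hPm : P ≤ maximalIdeal R)
    (hP : Ideal.span {a} * P ≤ maximalIdeal R * Ideal.span {b, c}) (n : ℕ) :
    relLength (maximalIdeal R * Ideal.span {a, b, c} ^ n) (Ideal.span {a, b, c} ^ n) =
      ((n + 2).choose 2 : ℕ) := by
  induction n with
  | zero => simpa using relLength_maximalIdeal_top (R := R)
  | succ n ih =>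
    have hcI : c ∈ Ideal.span {a, b, c} := Ideal.subset_span (by simp)
    have hcle : Ideal.span {c} * Ideal.span {a, b, c} ^ n ≤ Ideal.span {a, b, c} ^ (n + 1) := by
      rw [pow_succ']
      exact Ideal.mul_mono_left ((Ideal.span_singleton_le_iff_mem _).2 hcI)
    have hbot : relLength (maximalIdeal R * Ideal.span {a, b, c} ^ (n + 1))
        (Ideal.span {c} * Ideal.span {a, b, c} ^ n ⊔
          maximalIdeal R * Ideal.span {a, b, c} ^ (n + 1)) = ((n + 2).choose 2 : ℕ) := by
      rw [← ih]
      refine relLength_span_singleton_mul_sup fun r _ ↦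
        ⟨mem_mul_span_triple_pow_of_mul_mem hcreg hb hbc ha hPm hP, fun hr ↦ ?_⟩
      have hcr := Ideal.mul_mem_mul hcI hr
      rwa [mul_left_comm, ← pow_succ'] at hcr
    have htop := relLength_span_triple_pow_succ (Q := maximalIdeal R) hcreg hb hbc ha
      (hP.trans Ideal.mul_le_right) n
    rw [relLength_span_pair_pow_sup hb hbc ha hPm hP] at htop
    rw [← relLength_add_relLength le_sup_right (sup_le hcle Ideal.mul_le_right), hbot, htop,
      ← Nat.cast_add, Nat.choose_succ_succ' (n + 2) 1, Nat.choose_one_right, add_comm]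

end IsLocalRing

end FiberCone

/-- The ideal of maximal minors of the matrix with rows `(x, y, z)` and `(y, z, x²)`. -/
def minorsIdeal {R : Type*} [CommRing R] (x y z : R) : Ideal R :=
  Ideal.span {z ^ 2 - x ^ 2 * y, x ^ 3 - y * z, y ^ 2 - x * z}

/-- The element `d` which generates the second symbolic power of `I = minorsIdeal x y z` over
`I ^ 2`: with `a`, `b`, `c` the minors in the order of `minorsIdeal`, it is determined by
`x d = b² - a c`. -/
def symbolicGenerator {R : Type*} [CommRing R] (x y z : R) : R :=
  x ^ 5 - 3 * x ^ 2 * y * z + x * y ^ 3 + z ^ 3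

section MinorsIdeal

variable {R : Type*} [CommRing R] {x y z : R}

theorem symbolicGenerator_mem_minorsIdeal : symbolicGenerator x y z ∈ minorsIdeal x y z :=
  Submodule.mem_span_triple.2 ⟨z, x ^ 2, x * y, by
    simp only [symbolicGenerator, smul_eq_mul]; ring⟩

theorem minor_mem_minorsIdeal : y ^ 2 - x * z ∈ minorsIdeal x y z :=
  Ideal.subset_span (by simp)

theorem minorsIdeal_le : minorsIdeal x y z ≤ Ideal.span {x, y, z} := by
  refine Ideal.span_le.2 ?_
  rintro _ (rfl | rfl | rfl) <;> refine Submodule.mem_span_triple.2 ?_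
  · exact ⟨0, -x ^ 2, z, by simp only [smul_eq_mul]; ring⟩
  · exact ⟨x ^ 2, -z, 0, by simp only [smul_eq_mul]; ring⟩
  · exact ⟨-z, y, 0, by simp only [smul_eq_mul]; ring⟩

theorem minorsIdeal_le_maximalIdeal [IsLocalRing R] (hx : x ∈ maximalIdeal R)
    (hy : y ∈ maximalIdeal R) (hz : z ∈ maximalIdeal R) : minorsIdeal x y z ≤ maximalIdeal R :=
  minorsIdeal_le.trans (Ideal.span_le.2 (by
    simp [-mem_maximalIdeal, Set.insert_subset_iff, hx, hy, hz]))

theorem le_of_isPrime_of_minorsIdeal_le {q : Ideal R} (hq : q.IsPrime)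
    (hI : minorsIdeal x y z ≤ q) (hx : x ∈ q) : Ideal.span {x, y, z} ≤ q := by
  have ha : z ^ 2 - x ^ 2 * y ∈ q := hI (Ideal.subset_span (by simp))
  have hz : z ∈ q := hq.mem_of_pow_mem 2 ((Submodule.sub_mem_iff_left q
    (q.mul_mem_right y (q.pow_mem_of_mem hx 2 two_pos))).1 ha)
  have hy : y ∈ q := hq.mem_of_pow_mem 2 ((Submodule.sub_mem_iff_left q
    (q.mul_mem_right z hx)).1 (hI minor_mem_minorsIdeal))
  exact Ideal.span_le.2 (by simp [Set.insert_subset_iff, hx, hy, hz])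

theorem x_mul_symbolicGenerator : x * symbolicGenerator x y z =
    (x ^ 3 - y * z) * (x ^ 3 - y * z) - (z ^ 2 - x ^ 2 * y) * (y ^ 2 - x * z) := by
  rw [symbolicGenerator]; ring

theorem y_mul_symbolicGenerator : y * symbolicGenerator x y z =
    x * ((y ^ 2 - x * z) * (y ^ 2 - x * z)) - (z ^ 2 - x ^ 2 * y) * (x ^ 3 - y * z) := by
  rw [symbolicGenerator]; ring

theorem z_mul_symbolicGenerator : z * symbolicGenerator x y z =
    (z ^ 2 - x ^ 2 * y) * (z ^ 2 - x ^ 2 * y) - x * ((x ^ 3 - y * z) * (y ^ 2 - x * z)) := by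
  rw [symbolicGenerator]; ring

theorem span_mul_symbolicGenerator_le :
    Ideal.span {x, y, z} * Ideal.span {symbolicGenerator x y z} ≤ minorsIdeal x y z ^ 2 := by
  have ha : z ^ 2 - x ^ 2 * y ∈ minorsIdeal x y z := Ideal.subset_span (by simp)
  have hb : x ^ 3 - y * z ∈ minorsIdeal x y z := Ideal.subset_span (by simp)
  have hc : y ^ 2 - x * z ∈ minorsIdeal x y z := minor_mem_minorsIdeal
  have hmul : ∀ {u v}, u ∈ minorsIdeal x y z → v ∈ minorsIdeal x y z →
      u * v ∈ minorsIdeal x y z ^ 2 := fun hu hv ↦ sq (minorsIdeal x y z) ▸ Ideal.mul_mem_mul hu hv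
  have hx : x * symbolicGenerator x y z ∈ minorsIdeal x y z ^ 2 := by
    rw [x_mul_symbolicGenerator]
    exact sub_mem (hmul hb hb) (hmul ha hc)
  have hy : y * symbolicGenerator x y z ∈ minorsIdeal x y z ^ 2 := by
    rw [y_mul_symbolicGenerator]
    exact sub_mem (Ideal.mul_mem_left _ _ (hmul hc hc)) (hmul ha hb)
  have hz : z * symbolicGenerator x y z ∈ minorsIdeal x y z ^ 2 := by
    rw [z_mul_symbolicGenerator]
    exact sub_mem (hmul ha ha) (Ideal.mul_mem_left _ _ (hmul hb hc))
  rw [Ideal.span_mul_span', Ideal.span_le, Set.mul_singleton]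
  rintro _ ⟨_, rfl | rfl | rfl, rfl⟩
  exacts [hx, hy, hz]

theorem minorsIdeal_sq_le : minorsIdeal x y z ^ 2 ≤
    Ideal.span {symbolicGenerator x y z} * Ideal.span {x, y, z} ⊔
      Ideal.span {y ^ 2 - x * z} * minorsIdeal x y z := by
  set N := Ideal.span {symbolicGenerator x y z} * Ideal.span {x, y, z} ⊔
    Ideal.span {y ^ 2 - x * z} * minorsIdeal x y z
  have hd : ∀ u ∈ ({x, y, z} : Set R), u * symbolicGenerator x y z ∈ N := fun u hu ↦
    mul_comm u _ ▸ Ideal.mem_sup_left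
      (Ideal.mul_mem_mul (Ideal.mem_span_singleton_self _) (Ideal.subset_span hu))
  have hc : ∀ v ∈ minorsIdeal x y z, v * (y ^ 2 - x * z) ∈ N := fun v hv ↦
    mul_comm v _ ▸ Ideal.mem_sup_right (Ideal.mul_mem_mul (Ideal.mem_span_singleton_self _) hv)
  have ha : z ^ 2 - x ^ 2 * y ∈ minorsIdeal x y z := Ideal.subset_span (by simp)
  have hb : x ^ 3 - y * z ∈ minorsIdeal x y z := Ideal.subset_span (by simp)
  have hcc := hc _ minor_mem_minorsIdeal
  have haa : (z ^ 2 - x ^ 2 * y) * (z ^ 2 - x ^ 2 * y) ∈ N := by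
    rw [eq_add_of_sub_eq z_mul_symbolicGenerator.symm]
    exact add_mem (hd z (by simp)) (N.mul_mem_left x (hc _ hb))
  have hab : (z ^ 2 - x ^ 2 * y) * (x ^ 3 - y * z) ∈ N := by
    have hmem := sub_mem (N.mul_mem_left x hcc) (hd y (by simp))
    rwa [y_mul_symbolicGenerator, sub_sub_cancel] at hmem
  have hbb : (x ^ 3 - y * z) * (x ^ 3 - y * z) ∈ N := by
    rw [eq_add_of_sub_eq x_mul_symbolicGenerator.symm]
    exact add_mem (hd x (by simp)) (hc _ ha)
  rw [sq, minorsIdeal, Ideal.span_mul_span', Ideal.span_le]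
  rintro _ ⟨_, rfl | rfl | rfl, _, rfl | rfl | rfl, rfl⟩ <;> simp only [SetLike.mem_coe]
  exacts [haa, hab, hc _ ha, mul_comm (z ^ 2 - _) _ ▸ hab, hbb, hc _ hb,
    mul_comm (z ^ 2 - _) _ ▸ hc _ ha, mul_comm (x ^ 3 - _) _ ▸ hc _ hb, hcc]

theorem span_singleton_mul_span_pair_le :
    Ideal.span {z ^ 2 - x ^ 2 * y} * Ideal.span {x, y} ≤
      Ideal.span {x, y, z} * Ideal.span {x ^ 3 - y * z, y ^ 2 - x * z} := by
  have hmul : ∀ u ∈ ({x, y, z} : Set R), ∀ v ∈ ({x ^ 3 - y * z, y ^ 2 - x * z} : Set R),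
      u * v ∈ Ideal.span {x, y, z} * Ideal.span {x ^ 3 - y * z, y ^ 2 - x * z} := fun u hu v hv ↦
    Ideal.mul_mem_mul (Ideal.subset_span hu) (Ideal.subset_span hv)
  have hx : (z ^ 2 - x ^ 2 * y) * x = -(y * (x ^ 3 - y * z)) - z * (y ^ 2 - x * z) := by ring
  have hy : (z ^ 2 - x ^ 2 * y) * y = -(z * (x ^ 3 - y * z)) - x * (x * (y ^ 2 - x * z)) := by ring
  rw [Ideal.span_singleton_mul_le_iff]
  intro w hw
  obtain ⟨s, t, rfl⟩ := Ideal.mem_span_pair.1 hw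
  rw [mul_add, mul_left_comm, mul_left_comm _ t, hx, hy]
  exact add_mem
    (Ideal.mul_mem_left _ s (sub_mem (neg_mem (hmul _ (by simp) _ (by simp)))
      (hmul _ (by simp) _ (by simp))))
    (Ideal.mul_mem_left _ t (sub_mem (neg_mem (hmul _ (by simp) _ (by simp)))
      (Ideal.mul_mem_left _ x (hmul _ (by simp) _ (by simp)))))

end MinorsIdeal

section MinorsIdealRegular

open RingTheory.Sequence

variable {R : Type*} [CommRing R] [IsNoetherianRing R] [IsLocalRing R] {x y z : R}

theorem isWeaklyRegular_minor_symbolicGenerator (h : IsWeaklyRegular R [x, y, z])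
    (hx : x ∈ maximalIdeal R) (hy : y ∈ maximalIdeal R) (hz : z ∈ maximalIdeal R) :
    IsWeaklyRegular R [x, y ^ 2 - x * z, symbolicGenerator x y z] := by
  refine isWeaklyRegular_triple_of_sub_mem
    (isWeaklyRegular_triple_pow h hx hy hz two_ne_zero 3) ?_ ?_
  · exact Ideal.mem_span_singleton.2 ⟨-z, by ring⟩
  · exact Ideal.mem_span_pair.2 ⟨x ^ 4 - 3 * x * y * z + y ^ 3, 0, by
      rw [symbolicGenerator]; ring⟩

theorem isWeaklyRegular_minor_minor (h : IsWeaklyRegular R [x, y, z])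
    (hx : x ∈ maximalIdeal R) (hy : y ∈ maximalIdeal R) (hz : z ∈ maximalIdeal R) :
    IsWeaklyRegular R [x, y ^ 2 - x * z, z ^ 2 - x ^ 2 * y] := by
  refine isWeaklyRegular_triple_of_sub_mem
    (isWeaklyRegular_triple_pow h hx hy hz two_ne_zero 2) ?_ ?_
  · exact Ideal.mem_span_singleton.2 ⟨-z, by ring⟩
  · exact Ideal.mem_span_pair.2 ⟨-(x * y), 0, by ring⟩

theorem isSMulRegular_quotient_minorsIdeal (h : IsWeaklyRegular R [x, y, z])
    (hx : x ∈ maximalIdeal R) (hy : y ∈ maximalIdeal R) (hz : z ∈ maximalIdeal R) :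
    IsSMulRegular (R ⧸ minorsIdeal x y z) x := by
  have hI := minorsIdeal_le_maximalIdeal hx hy hz
  obtain ⟨hyreg, hzreg, -⟩ :=
    isWeaklyRegular_triple_iff.1 (isWeaklyRegular_triple_rotate h hx hy hz)
  obtain ⟨hcreg, hareg, hxreg⟩ := isWeaklyRegular_triple_iff.1 <|
    isWeaklyRegular_triple_rotate (isWeaklyRegular_minor_minor h hx hy hz) hx
      (hI minor_mem_minorsIdeal) (hI (Ideal.subset_span (by simp)))
  exact isSMulRegular_quotient_span_minors (p₁ := x) (p₂ := y) (p₃ := z) (q₁ := y) (q₂ := z)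
    (q₃ := x ^ 2) (by ring) (by ring) (by ring) hyreg hzreg hcreg hareg hxreg

theorem isWeaklyRegular_minor_symbolicGenerator_rotate (h : IsWeaklyRegular R [x, y, z])
    (hx : x ∈ maximalIdeal R) (hy : y ∈ maximalIdeal R) (hz : z ∈ maximalIdeal R) :
    IsWeaklyRegular R [y ^ 2 - x * z, symbolicGenerator x y z, x] :=
  have hI := minorsIdeal_le_maximalIdeal hx hy hz
  isWeaklyRegular_triple_rotate (isWeaklyRegular_minor_symbolicGenerator h hx hy hz) hx
    (hI minor_mem_minorsIdeal) (hI symbolicGenerator_mem_minorsIdeal)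

theorem isSMulRegular_quotient_symbolicFiltration_minorsIdeal (h : IsWeaklyRegular R [x, y, z])
    (hx : x ∈ maximalIdeal R) (hy : y ∈ maximalIdeal R) (hz : z ∈ maximalIdeal R) (n : ℕ) :
    IsSMulRegular (R ⧸ symbolicFiltration (minorsIdeal x y z) (symbolicGenerator x y z) n) x := by
  have hI := minorsIdeal_le_maximalIdeal hx hy hz
  obtain ⟨hcreg, hdreg, -⟩ :=
    isWeaklyRegular_triple_iff.1 (isWeaklyRegular_minor_symbolicGenerator_rotate h hx hy hz)
  obtain ⟨-, hxc, hdcx⟩ := isWeaklyRegular_triple_iff.1 <|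
    isWeaklyRegular_triple_swap (isWeaklyRegular_minor_symbolicGenerator h hx hy hz) hx
      (hI minor_mem_minorsIdeal) (hI symbolicGenerator_mem_minorsIdeal)
  exact isSMulRegular_quotient_symbolicFiltration minor_mem_minorsIdeal
    symbolicGenerator_mem_minorsIdeal minorsIdeal_sq_le hcreg hdreg hxc hdcx
    (isSMulRegular_quotient_minorsIdeal h hx hy hz) n

theorem isSMulRegular_quotient_minor (h : IsWeaklyRegular R [x, y, z])
    (hx : x ∈ maximalIdeal R) (hy : y ∈ maximalIdeal R) (hz : z ∈ maximalIdeal R) :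
    IsSMulRegular (R ⧸ Ideal.span {y ^ 2 - x * z}) (x ^ 3 - y * z) := by
  have hI := minorsIdeal_le_maximalIdeal hx hy hz
  obtain ⟨-, hdreg, -⟩ :=
    isWeaklyRegular_triple_iff.1 (isWeaklyRegular_minor_symbolicGenerator_rotate h hx hy hz)
  obtain ⟨-, hxreg, -⟩ := isWeaklyRegular_triple_iff.1 <|
    isWeaklyRegular_triple_swap (isWeaklyRegular_minor_symbolicGenerator h hx hy hz) hx
      (hI minor_mem_minorsIdeal) (hI symbolicGenerator_mem_minorsIdeal)
  have hxd : (x ^ 3 - y * z) * (x ^ 3 - y * z) - x * symbolicGenerator x y z ∈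
      Ideal.span {y ^ 2 - x * z} := by
    rw [x_mul_symbolicGenerator, sub_sub_cancel]
    exact Ideal.mul_mem_left _ _ (Ideal.mem_span_singleton_self _)
  exact ((isSMulRegular_quotient_iff_of_sub_mem hxd).2 (hxreg.mul hdreg)).of_mul

theorem relLength_minorsIdeal_pow (hm : maximalIdeal R = Ideal.span {x, y, z})
    (h : IsWeaklyRegular R [x, y, z]) (n : ℕ) :
    relLength (maximalIdeal R * minorsIdeal x y z ^ n) (minorsIdeal x y z ^ n) =
      ((n + 2).choose 2 : ℕ) := by
  have hx : x ∈ maximalIdeal R := hm ▸ Ideal.subset_span (by simp)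
  have hy : y ∈ maximalIdeal R := hm ▸ Ideal.subset_span (by simp)
  have hz : z ∈ maximalIdeal R := hm ▸ Ideal.subset_span (by simp)
  have hcreg := (isWeaklyRegular_triple_iff.1
    (isWeaklyRegular_minor_symbolicGenerator_rotate h hx hy hz)).1
  refine relLength_span_triple_pow (P := Ideal.span {x, y}) hcreg
    (isSMulRegular_quotient_minor h hx hy hz) ?_ ?_ ?_ ?_ n
  · refine Ideal.span_le.2 ?_
    rintro _ (rfl | rfl)
    · exact Ideal.mem_span_pair.2 ⟨x ^ 2, -z, by ring⟩
    · exact Ideal.mem_span_pair.2 ⟨-z, y, by ring⟩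
  · have hz2 := (isWeaklyRegular_triple_iff.1 h).2.2.pow 2
    exact (isSMulRegular_quotient_iff_of_sub_mem
      (Ideal.mem_span_pair.2 ⟨-(x * y), 0, by ring⟩)).2 hz2
  · exact hm ▸ Ideal.span_mono (by simp [Set.insert_subset_insert])
  · exact hm ▸ span_singleton_mul_span_pair_le

theorem symbolicPower_minorsIdeal (hm : maximalIdeal R = Ideal.span {x, y, z})
    (h : IsWeaklyRegular R [x, y, z]) (n : ℕ) :
    symbolicPower (minorsIdeal x y z) n =
      symbolicFiltration (minorsIdeal x y z) (symbolicGenerator x y z) n := by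
  have hx : x ∈ maximalIdeal R := hm ▸ Ideal.subset_span (by simp)
  have hy : y ∈ maximalIdeal R := hm ▸ Ideal.subset_span (by simp)
  have hz : z ∈ maximalIdeal R := hm ▸ Ideal.subset_span (by simp)
  exact symbolicPower_eq_of_isSMulRegular hx
    (fun q hq hIq hxq ↦ hm ▸ le_of_isPrime_of_minorsIdeal_le hq hIq hxq)
    (isSMulRegular_quotient_minorsIdeal h hx hy hz)
    (isSMulRegular_quotient_symbolicFiltration_minorsIdeal h hx hy hz n)
    (pow_le_symbolicFiltration n)
    (pow_mul_symbolicFiltration_le (hm ▸ span_mul_symbolicGenerator_le) n)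

theorem relLength_pow_symbolicFiltration_minorsIdeal (hm : maximalIdeal R = Ideal.span {x, y, z})
    (h : IsWeaklyRegular R [x, y, z]) (n : ℕ) :
    relLength (minorsIdeal x y z ^ n)
        (symbolicFiltration (minorsIdeal x y z) (symbolicGenerator x y z) n) =
      (∑ k ∈ Finset.Icc 1 (n / 2), (n - 2 * k + 2).choose 2 : ℕ) := by
  have hx : x ∈ maximalIdeal R := hm ▸ Ideal.subset_span (by simp)
  have hy : y ∈ maximalIdeal R := hm ▸ Ideal.subset_span (by simp)
  have hz : z ∈ maximalIdeal R := hm ▸ Ideal.subset_span (by simp)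
  obtain ⟨hcreg, hdreg, -⟩ :=
    isWeaklyRegular_triple_iff.1 (isWeaklyRegular_minor_symbolicGenerator_rotate h hx hy hz)
  refine relLength_pow_symbolicFiltration (fun n r ↦ ?_) (relLength_minorsIdeal_pow hm h) n
  exact mul_mem_pow_add_two_iff (hm ▸ minorsIdeal_le) minor_mem_minorsIdeal
    (hm ▸ span_mul_symbolicGenerator_le) (hm ▸ minorsIdeal_sq_le) hcreg hdreg n

end MinorsIdealRegular

/-- Let `R` be a 3-dimensional regular local ring with `m = (x, y, z)` and
`I = (z² - x²y, x³ - yz, y² - xz)`.  For every `n ≥ 1`,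
`length(I⁽ⁿ⁾/Iⁿ) = Σ_{k=1}^{⌊n/2⌋} C(n - 2k + 2, 2)`. -/
theorem symbolic_power_quotient_length
    {R : Type*} [CommRing R] [IsNoetherianRing R] [IsLocalRing R]
    (hdim : ringKrullDim R = 3)
    (x y z : R) (hreg : maximalIdeal R = Ideal.span {x, y, z})
    (I : Ideal R)
    (hI : I = Ideal.span {z ^ 2 - x ^ 2 * y, x ^ 3 - y * z, y ^ 2 - x * z}) :
    ∀ n : ℕ, 1 ≤ n →
      HasLength R
        (↥(symbolicPower I n) ⧸
          Submodule.comap (symbolicPower I n).subtype ((I ^ n : Ideal R) : Submodule R R))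
        (∑ k ∈ Finset.Icc 1 (n / 2), (n - 2 * k + 2).choose 2) := by
  intro n _
  have hl : Ideal.ofList [x, y, z] = maximalIdeal R := by
    rw [hreg, Ideal.ofList]
    congr 1
    ext
    simp
  have hxyz : RingTheory.Sequence.IsWeaklyRegular R [x, y, z] :=
    isWeaklyRegular_of_length_le_ringKrullDim hl hdim.ge
  replace hI : I = minorsIdeal x y z := hI
  rw [hI, symbolicPower_minorsIdeal hreg hxyz]
  exact hasLength_of_length_eq (relLength_pow_symbolicFiltration_minorsIdeal hreg hxyz n)
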